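/- Let R be a commutative ring, n a positive integer, and A an invertible symmetric n×n matrix over R. Let M ⊆ R[x_1,…,x_n] be the R-submodule generated by all elements of the form ∂h/∂x_a + (Σ_b A_{ab}x_b)·h with h ∈ R[x_1,…,x_n] and a ∈ {1,…,n}. Then: (i) for every g ∈ R[x_1,…,x_n] there is a unique r_g ∈ R such that g − r_g·1 ∈ M; and (ii) every R-linear functional I : R[x_1,…,x_n] → R that vanishes on M satisfies I(g) = r_g·I(1) for all g. In particular, any such functional is determined up to a constant factor: if additionally I(1) = 1 then I is unique. -/

import Mathlib

open MvPolynomial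

noncomputable section

/-- The `R`-submodule of `R[x_1,…,x_n]` generated by all elements of the form
`∂h/∂x_a + (Σ_b A_{ab}x_b)·h`, i.e. by the coefficients of twisted-exact
top-degree forms for `f = ½xᵗAx`. -/
def twistedExact {n : ℕ} {R : Type*} [CommRing R]
    (A : Matrix (Fin n) (Fin n) R) : Submodule R (MvPolynomial (Fin n) R) :=
  Submodule.span R
    {p | ∃ (a : Fin n) (h : MvPolynomial (Fin n) R),
      p = pderiv a h + (∑ b, C (A a b) * X b) * h}

/-!
The operators `X_c + Σ_a B_{ca} ∂_a` on `R[x]` commute because `B` is symmetric, so there is a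
linear map `W_B` with `W_B 1 = 1` that intertwines multiplication by `X_c` with
`X_c + Σ_a B_{ca} ∂_a`. Since `W_B` commutes with constant-coefficient derivations, `W_{-B}` is its
inverse. For `B = A⁻¹` the twisted-exact polynomials are the sums of images of these operators, so
`W_B` carries the polynomials without constant term onto them. They are therefore the kernel of the
functional `g ↦ constantCoeff (W_{-B} g)`, which sends `1` to `1`.
-/

lemma derivation_sum_apply {R A M ι : Type*} [CommSemiring R] [CommSemiring A]
    [AddCommMonoid M] [Algebra R A] [Module A M] [Module R M] (s : Finset ι)
    (D : ι → Derivation R A M) (x : A) : (∑ i ∈ s, D i) x = ∑ i ∈ s, D i x := by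
  simpa only [Derivation.coeFnAddMonoidHom_apply, Finset.sum_apply] using
    congr_fun (map_sum Derivation.coeFnAddMonoidHom D s) x

section DirectionalDerivative

variable {R σ : Type*} [CommSemiring R]

/-- The derivation `Σ_i v_i ∂_i` in the constant direction `v`. Specifying it by its values on the
variables allows `σ` to be infinite. -/
def dirDeriv (v : σ → R) : Derivation R (MvPolynomial σ R) (MvPolynomial σ R) :=
  mkDerivation R fun i => C (v i)

@[simp]
lemma dirDeriv_X (v : σ → R) (i : σ) : dirDeriv v (X i) = C (v i) :=
  mkDerivation_X R _ i

lemma dirDeriv_X_mul (v : σ → R) (i : σ) (p : MvPolynomial σ R) :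
    dirDeriv v (X i * p) = X i * dirDeriv v p + v i • p := by
  rw [Derivation.leibniz, dirDeriv_X, smul_eq_mul, smul_eq_mul, smul_eq_C_mul, mul_comm p]

lemma dirDeriv_one_row [DecidableEq σ] (a : σ) :
    dirDeriv ((1 : Matrix σ σ R).row a) = pderiv a :=
  derivation_ext fun i => by
    simp [Matrix.one_apply, pderiv_X, Pi.single_apply, eq_comm, apply_ite C]

lemma dirDeriv_mul_row {ι κ : Type*} [Fintype κ] (A : Matrix ι κ R) (B : Matrix κ σ R) (a : ι)
    (p : MvPolynomial σ R) :
    dirDeriv ((A * B).row a) p = ∑ c, A a c • dirDeriv (B.row c) p := by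
  have dirDeriv_eq_sum : dirDeriv ((A * B).row a) = ∑ c, A a c • dirDeriv (B.row c) :=
    derivation_ext fun i => by
      simp [derivation_sum_apply, Matrix.mul_apply, smul_eq_C_mul]
  rw [dirDeriv_eq_sum, derivation_sum_apply]
  simp only [Derivation.smul_apply]

lemma dirDeriv_comm (v w : σ → R) (p : MvPolynomial σ R) :
    dirDeriv v (dirDeriv w p) = dirDeriv w (dirDeriv v p) := by
  induction p using MvPolynomial.induction_on with
  | C r => simp only [derivation_C, map_zero]
  | add p q hp hq => simp only [map_add, hp, hq]
  | mul_X p i hp =>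
    rw [mul_comm]
    simp only [dirDeriv_X_mul, map_add, Derivation.map_smul, hp]
    exact add_right_comm _ _ _

end DirectionalDerivative

section CommutingEvaluation

variable {R S σ : Type*} [CommSemiring R] [Semiring S] [Algebra R S]

open scoped IsMulCommutative in
/-- Evaluation of polynomials at pairwise commuting elements of a noncommutative algebra, factored
through the commutative subalgebra they generate. -/
def aevalOfCommute (f : σ → S) (hf : ∀ i j, Commute (f i) (f j)) : MvPolynomial σ R →ₐ[R] S :=
  haveI : IsMulCommutative (Algebra.adjoin R (Set.range f)) :=
    Algebra.isMulCommutative_adjoin R <| by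
      rintro _ ⟨i, rfl⟩ _ ⟨j, rfl⟩
      exact hf i j
  (Algebra.adjoin R (Set.range f)).val.comp
    (aeval fun i => ⟨f i, Algebra.subset_adjoin (Set.mem_range_self i)⟩)

@[simp]
lemma aevalOfCommute_X (f : σ → S) (hf : ∀ i j, Commute (f i) (f j)) (i : σ) :
    aevalOfCommute (R := R) f hf (X i) = f i := by
  simp [aevalOfCommute]

end CommutingEvaluation

section WickTransform

variable {R σ : Type*} [CommSemiring R] {B : Matrix σ σ R}

/-- The operator `X_c + Σ_a B_{ca} ∂_a`, whose image consists of twisted-exact polynomials when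
`B = A⁻¹`. -/
def wickOp (B : Matrix σ σ R) (c : σ) : Module.End R (MvPolynomial σ R) :=
  LinearMap.mulLeft R (X c) + (dirDeriv (B.row c)).toLinearMap

lemma wickOp_apply (B : Matrix σ σ R) (c : σ) (p : MvPolynomial σ R) :
    wickOp B c p = X c * p + dirDeriv (B.row c) p :=
  rfl

lemma dirDeriv_wickOp (v : σ → R) (B : Matrix σ σ R) (c : σ) (p : MvPolynomial σ R) :
    dirDeriv v (wickOp B c p) = wickOp B c (dirDeriv v p) + v c • p := by
  rw [wickOp_apply, wickOp_apply, map_add, dirDeriv_X_mul, dirDeriv_comm v]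
  abel

lemma commute_wickOp (hB : B.IsSymm) (c d : σ) : Commute (wickOp B c) (wickOp B d) := by
  refine LinearMap.ext fun p => ?_
  have expand (c d : σ) : wickOp B c (wickOp B d p) =
      X c * (X d * p) + X c * dirDeriv (B.row d) p + X d * dirDeriv (B.row c) p +
        dirDeriv (B.row d) (dirDeriv (B.row c) p) + B c d • p := by
    rw [wickOp_apply B c, dirDeriv_wickOp, wickOp_apply, wickOp_apply, Matrix.row_apply]
    ring
  rw [Module.End.mul_apply, Module.End.mul_apply, expand c d, expand d c, hB.apply c d,
    dirDeriv_comm (B.row c)]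
  ring

/-- The linear map `p ↦ p(T) 1` for the commuting operators `T_c = X_c + Σ_a B_{ca} ∂_a`. It plays
the role of `exp (½ Σ B_{ab} ∂_a ∂_b)`, without the denominators of the exponential series. -/
def wickTransform (hB : B.IsSymm) : MvPolynomial σ R →ₗ[R] MvPolynomial σ R :=
  LinearMap.applyₗ 1 ∘ₗ (aevalOfCommute (wickOp B) (commute_wickOp hB)).toLinearMap

@[simp]
lemma wickTransform_C (hB : B.IsSymm) (r : R) : wickTransform hB (C r) = C r := by
  simp [wickTransform, ← algebraMap_eq, Algebra.algebraMap_eq_smul_one]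

lemma wickTransform_X_mul (hB : B.IsSymm) (c : σ) (p : MvPolynomial σ R) :
    wickTransform hB (X c * p) = wickOp B c (wickTransform hB p) := by
  simp [wickTransform]

lemma dirDeriv_wickTransform (hB : B.IsSymm) (v : σ → R) (p : MvPolynomial σ R) :
    dirDeriv v (wickTransform hB p) = wickTransform hB (dirDeriv v p) := by
  induction p using MvPolynomial.induction_on with
  | C r => simp only [wickTransform_C, derivation_C, map_zero]
  | add p q hp hq => simp only [map_add, hp, hq]
  | mul_X p c hp =>
    rw [mul_comm, wickTransform_X_mul, dirDeriv_wickOp, hp, dirDeriv_X_mul, map_add,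
      wickTransform_X_mul, map_smul]

end WickTransform

section GaussianIntegral

variable {R σ : Type*} [CommRing R] {B : Matrix σ σ R}

lemma dirDeriv_neg (v : σ → R) : dirDeriv (-v) = -dirDeriv v :=
  derivation_ext fun i => by simp

lemma wickOp_neg_apply (B : Matrix σ σ R) (c : σ) (p : MvPolynomial σ R) :
    wickOp (-B) c p = X c * p - dirDeriv (B.row c) p := by
  have row_neg : (-B).row c = -B.row c := rfl
  rw [wickOp_apply, row_neg, dirDeriv_neg, Derivation.neg_apply, sub_eq_add_neg]

lemma wickTransform_neg_wickOp (hB : B.IsSymm) (c : σ) (p : MvPolynomial σ R) :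
    wickTransform hB.neg (wickOp B c p) = X c * wickTransform hB.neg p := by
  rw [wickOp_apply, map_add, wickTransform_X_mul, wickOp_neg_apply,
    dirDeriv_wickTransform hB.neg, sub_add_cancel]

lemma wickTransform_wickTransform_neg (hB : B.IsSymm) (p : MvPolynomial σ R) :
    wickTransform hB (wickTransform hB.neg p) = p := by
  induction p using MvPolynomial.induction_on with
  | C r => simp only [wickTransform_C]
  | add p q hp hq => simp only [map_add, hp, hq]
  | mul_X p c hp =>
    rw [mul_comm, wickTransform_X_mul, wickOp_neg_apply, map_sub, wickTransform_X_mul, hp,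
      ← dirDeriv_wickTransform, hp, wickOp_apply, add_sub_cancel_right]

/-- The normalized integral `g ↦ ∫ g e^f dx / ∫ e^f dx` for `f = ½xᵗAx` and `B = A⁻¹`, as an
algebraic functional. Wick's theorem for the weight `e^f`, rather than `e^{-f}`, has covariance
`-B`. -/
def gaussianIntegral (hB : B.IsSymm) : MvPolynomial σ R →ₗ[R] R :=
  lcoeff R 0 ∘ₗ wickTransform hB.neg

lemma gaussianIntegral_apply (hB : B.IsSymm) (g : MvPolynomial σ R) :
    gaussianIntegral hB g = constantCoeff (wickTransform hB.neg g) :=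
  rfl

@[simp]
lemma gaussianIntegral_C (hB : B.IsSymm) (r : R) : gaussianIntegral hB (C r) = r := by
  rw [gaussianIntegral_apply, wickTransform_C, constantCoeff_C]

lemma gaussianIntegral_wickOp (hB : B.IsSymm) (c : σ) (p : MvPolynomial σ R) :
    gaussianIntegral hB (wickOp B c p) = 0 := by
  rw [gaussianIntegral_apply, wickTransform_neg_wickOp hB, map_mul, constantCoeff_X, zero_mul]

end GaussianIntegral

section TwistedExact

variable {R : Type*} [CommRing R] {n : ℕ} {A B : Matrix (Fin n) (Fin n) R}

lemma sum_smul_wickOp (hAB : A * B = 1) (a : Fin n) (h : MvPolynomial (Fin n) R) :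
    ∑ c, A a c • wickOp B c h = pderiv a h + (∑ b, C (A a b) * X b) * h := by
  have sum_dirDeriv : ∑ c, A a c • dirDeriv (B.row c) h = pderiv a h := by
    rw [← dirDeriv_one_row, ← hAB, dirDeriv_mul_row]
  simp only [wickOp_apply, smul_add, Finset.sum_add_distrib, sum_dirDeriv, Finset.sum_mul,
    ← smul_eq_C_mul, smul_mul_assoc]
  rw [add_comm]

lemma wickOp_mem_twistedExact (hAB : A * B = 1) (c : Fin n) (h : MvPolynomial (Fin n) R) :
    wickOp B c h ∈ twistedExact A := by
  have hBA : B * A = 1 := mul_eq_one_comm.mp hAB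
  have wickOp_eq_sum : wickOp B c h = ∑ a, B c a • ∑ d, A a d • wickOp B d h := by
    simp only [Finset.smul_sum, smul_smul]
    rw [Finset.sum_comm]
    simp only [← Finset.sum_smul, ← Matrix.mul_apply, hBA, Matrix.one_apply, ite_smul, one_smul,
      zero_smul, Finset.sum_ite_eq, Finset.mem_univ, if_true]
  rw [wickOp_eq_sum]
  refine Submodule.sum_mem _ fun a _ => Submodule.smul_mem _ _ (Submodule.subset_span ⟨a, h, ?_⟩)
  exact sum_smul_wickOp hAB a h

lemma wickTransform_sub_C_mem_twistedExact (hB : B.IsSymm) (hAB : A * B = 1)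
    (p : MvPolynomial (Fin n) R) :
    wickTransform hB p - C (constantCoeff p) ∈ twistedExact A := by
  induction p using MvPolynomial.induction_on with
  | C r => simp only [wickTransform_C, constantCoeff_C, sub_self, Submodule.zero_mem]
  | add p q hp hq =>
    simp only [map_add, add_sub_add_comm]
    exact Submodule.add_mem _ hp hq
  | mul_X p c _ =>
    rw [map_mul constantCoeff, constantCoeff_X, mul_zero, C_0, sub_zero, mul_comm,
      wickTransform_X_mul]
    exact wickOp_mem_twistedExact hAB c _

lemma sub_C_gaussianIntegral_mem_twistedExact (hB : B.IsSymm) (hAB : A * B = 1)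
    (g : MvPolynomial (Fin n) R) : g - C (gaussianIntegral hB g) ∈ twistedExact A := by
  simpa only [wickTransform_wickTransform_neg, gaussianIntegral_apply] using
    wickTransform_sub_C_mem_twistedExact hB hAB (wickTransform hB.neg g)

lemma twistedExact_eq_ker_gaussianIntegral (hB : B.IsSymm) (hAB : A * B = 1) :
    twistedExact A = LinearMap.ker (gaussianIntegral hB) := by
  refine le_antisymm (Submodule.span_le.mpr ?_) fun g hg => ?_
  · rintro _ ⟨a, h, rfl⟩
    simp only [← sum_smul_wickOp hAB, SetLike.mem_coe, LinearMap.mem_ker, map_sum, map_smul,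
      gaussianIntegral_wickOp, smul_zero, Finset.sum_const_zero]
  · simpa only [LinearMap.mem_ker.mp hg, C_0, sub_zero] using
      sub_C_gaussianIntegral_mem_twistedExact hB hAB g

lemma sub_C_mem_twistedExact_iff (hB : B.IsSymm) (hAB : A * B = 1)
    {g : MvPolynomial (Fin n) R} {r : R} :
    g - C r ∈ twistedExact A ↔ gaussianIntegral hB g = r := by
  rw [twistedExact_eq_ker_gaussianIntegral hB hAB, LinearMap.mem_ker, map_sub, gaussianIntegral_C,
    sub_eq_zero]

lemma eq_smul_gaussianIntegral (hB : B.IsSymm) (hAB : A * B = 1)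
    {I : MvPolynomial (Fin n) R →ₗ[R] R} (hI : ∀ m ∈ twistedExact A, I m = 0) :
    I = I 1 • gaussianIntegral hB := by
  refine LinearMap.ext fun g => ?_
  calc I g = I (C (gaussianIntegral hB g)) := by
        rw [← sub_eq_zero, ← map_sub]
        exact hI _ (sub_C_gaussianIntegral_mem_twistedExact hB hAB g)
    _ = gaussianIntegral hB g * I 1 := by
        rw [← mul_one (C _), ← smul_eq_C_mul, map_smul, smul_eq_mul]
    _ = (I 1 • gaussianIntegral hB) g := by
        rw [LinearMap.smul_apply, smul_eq_mul, mul_comm]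

end TwistedExact

/-- Let `A` be an invertible symmetric matrix over a
commutative ring `R` and let `M` be the submodule generated by the elements
`∂_a h + (∂_a f)h` with `f = ½xᵗAx`.  Then (i) every `g` is congruent modulo
`M` to a unique constant `r_g·1`; (ii) every `R`-linear functional `I`
vanishing on `M` satisfies `I(g) = r_g·I(1)`; in particular such a functional
is unique once normalized by `I(1) = 1`. -/
theorem homological_integral_unique {R : Type*} [CommRing R] {n : ℕ}
    (hn : 0 < n) (A B : Matrix (Fin n) (Fin n) R) (hsymm : A.IsSymm)
    (hAB : A * B = 1) (hBA : B * A = 1) :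
    (∀ g : MvPolynomial (Fin n) R, ∃! r : R, g - C r ∈ twistedExact A) ∧
    (∀ I : MvPolynomial (Fin n) R →ₗ[R] R,
      (∀ m ∈ twistedExact A, I m = 0) →
      ∀ (g : MvPolynomial (Fin n) R) (r : R),
        g - C r ∈ twistedExact A → I g = r * I 1) ∧
    (∀ I I' : MvPolynomial (Fin n) R →ₗ[R] R,
      (∀ m ∈ twistedExact A, I m = 0) → (∀ m ∈ twistedExact A, I' m = 0) →
      I 1 = 1 → I' 1 = 1 → I = I') := by
  have hB : B.IsSymm := Matrix.inv_eq_right_inv hAB ▸ hsymm.inv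
  refine ⟨fun g => ?_, fun I hI g r hg => ?_, fun I I' hI hI' hI1 hI'1 => ?_⟩
  · simp only [sub_C_mem_twistedExact_iff hB hAB]
    exact existsUnique_eq'
  · rw [sub_C_mem_twistedExact_iff hB hAB] at hg
    rw [← hg, mul_comm]
    exact LinearMap.congr_fun (eq_smul_gaussianIntegral hB hAB hI) g
  · rw [eq_smul_gaussianIntegral hB hAB hI, eq_smul_gaussianIntegral hB hAB hI', hI1, hI'1]

end
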